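/- Let d ≥ 1, s ∈ (0,1), p ∈ (1,∞), R₀ ∈ (0,1), k ∈ ℕ, and let u ∈ L^{p−1}_{sp}(ℝ^d) be continuous on B_{R₀}(0) and vanish to infinite order at 0 (for every n ∈ ℕ, u(x) = O(|x|^n) as |x| → 0). For ε > 0 and x ∈ ℝ^d define W₂(x,ε) := ∫_{B_{(k+1)ε}(x)^c} J_p(u(x)−u(y)) |x−y|^{−d−sp} dy + ∫_{B_{(k+1)ε}(0)^c} J_p(u(y)) |y|^{−d−sp} dy + ∫_{B_{(k+1)ε}(0)^c} J_p(u(y)) (|x−y|^{−d−sp} − |y|^{−d−sp}) dy. Then W₂ converges to zero of arbitrary order: for every n ∈ ℕ there exist C > 0 and ε₁ > 0 such that sup_{x ∈ B_{kε}(0)} |W₂(x,ε)| ≤ C ε^n for all ε ∈ (0,ε₁). -/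

import Mathlib

open MeasureTheory Filter Asymptotics Metric Set NNReal ENNReal

noncomputable section

/-- Euclidean space `ℝ^d`. -/
abbrev Ed (d : ℕ) := EuclideanSpace ℝ (Fin d)

/-- `J_p(t) = |t|^{p-2} t`. -/
def Jp (p t : ℝ) : ℝ := |t| ^ (p - 2) * t

/-- The principal value defining the fractional `p`-Laplacian of `u` at `x` exists and
equals `L`. -/
def fracPLapAt (d : ℕ) (s p : ℝ) (u : Ed d → ℝ) (x : Ed d) (L : ℝ) : Prop :=
  Tendsto (fun δ : ℝ =>
      ∫ y in {y : Ed d | δ < ‖x - y‖}, Jp p (u x - u y) / ‖x - y‖ ^ ((d : ℝ) + s * p))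
    (nhdsWithin 0 (Ioi 0)) (nhds L)

/-- Membership in the tail space `L^{p-1}_{sp}(ℝ^d)`. -/
def memTail (d : ℕ) (s p : ℝ) (u : Ed d → ℝ) : Prop :=
  Measurable u ∧
    Integrable (fun x : Ed d => |u x| ^ (p - 1) / (1 + ‖x‖) ^ ((d : ℝ) + s * p))

/-- The moments `m_{i,k} = ∫ x_i^{2k} |x|^{-4k} |u(x)|^{p-1} |x|^{-d-sp} dx ∈ [0,∞]`. -/
def mik (d : ℕ) (s p : ℝ) (u : Ed d → ℝ) (i : Fin d) (k : ℕ) : ℝ≥0∞ :=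
  ∫⁻ x : Ed d, ENNReal.ofReal
    ((x i ^ (2 * k) / ‖x‖ ^ (4 * k)) * (|u x| ^ (p - 1) / ‖x‖ ^ ((d : ℝ) + s * p)))

/-- The Carleman-type condition: for every `i` the series `∑_{k≥1} m_{i,k}^{-1/(2k)}`
diverges to `+∞` (with conventions `1/0 = ∞`, `1/∞ = 0`). -/
def carleman (d : ℕ) (s p : ℝ) (u : Ed d → ℝ) : Prop :=
  ∀ i : Fin d, ∑' k : ℕ, (mik d s p u i (k + 1) ^ ((1 : ℝ) / (2 * ((k : ℝ) + 1))))⁻¹ = ⊤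

/-!
Adding the second and third integrals of `W₂` leaves one kernel `|x - y|^{-d-sp}`, with numerator
`J_p(u(x) - u(y)) + J_p(u(y))` outside both balls. As `J_p` is odd and locally Hölder continuous
with exponent `θ = min (1, p - 1)`, this numerator is `O(|u(x)|^θ (1 + |u(y)|)^{p-1})`; where only
one of the two terms is present, `y` lies in `B_{2(k+1)ε}(0)` and the term is small because `u(y)`
is. On the domain of integration `|x - y| ≥ ε`, so the kernel costs at most a factor `ε^{-d-sp}`
compared with the tail weight `(1 + |y|)^{-d-sp}`, and infinite order vanishing of `u` absorbs it.
-/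

section Jp

variable {p : ℝ}

theorem abs_Jp (hp : 1 < p) (t : ℝ) : |Jp p t| = |t| ^ (p - 1) := by
  rcases eq_or_ne t 0 with rfl | ht
  · simp [Jp, Real.zero_rpow (sub_pos.2 hp).ne']
  · rw [Jp, abs_mul, abs_of_nonneg (by positivity), ← Real.rpow_add_one (by positivity)]
    ring_nf

theorem abs_Jp_le_rpow (hp : 1 < p) {t b : ℝ} (ht : |t| ≤ b) : |Jp p t| ≤ b ^ (p - 1) :=
  (abs_Jp hp t).trans_le (Real.rpow_le_rpow (abs_nonneg t) ht (sub_pos.2 hp).le)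

theorem Jp_of_nonneg (hp : 1 < p) {t : ℝ} (ht : 0 ≤ t) : Jp p t = t ^ (p - 1) := by
  have hJ : 0 ≤ Jp p t := by unfold Jp; positivity
  rw [← abs_of_nonneg hJ, abs_Jp hp, abs_of_nonneg ht]

theorem Jp_neg (p t : ℝ) : Jp p (-t) = -Jp p t := by
  simp [Jp]

theorem measurable_Jp (p : ℝ) : Measurable (Jp p) := by
  unfold Jp
  fun_prop

theorem rpow_sub_rpow_le_mul_sub {q x y : ℝ} (hq : 1 ≤ q) (hx : 0 < x) (hy : 0 ≤ y) :
    x ^ q - y ^ q ≤ q * (x - y) * x ^ (q - 1) := by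
  have bernoulli : 1 + q * (y / x - 1) ≤ (y / x) ^ q := by
    have h := one_add_mul_self_le_rpow_one_add (s := y / x - 1) (p := q)
      (by linarith [div_nonneg hy hx.le]) hq
    rwa [add_sub_cancel] at h
  rw [Real.div_rpow hy hx.le, le_div_iff₀ (by positivity)] at bernoulli
  have hpow : x ^ q = x ^ (q - 1) * x := by
    rw [← Real.rpow_add_one hx.ne', sub_add_cancel]
  have hlin : (1 + q * (y / x - 1)) * x ^ q = x ^ q - q * (x - y) * x ^ (q - 1) := by
    rw [hpow]
    field_simp
    ring
  linarith

theorem abs_rpow_sub_rpow_le {q x y : ℝ} (hq : 0 ≤ q) (hx : 0 ≤ x) (hy : 0 ≤ y) :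
    |x ^ q - y ^ q| ≤ max 1 q * |x - y| ^ min 1 q * max x y ^ (q - min 1 q) := by
  wlog hyx : y ≤ x generalizing x y
  · rw [abs_sub_comm, abs_sub_comm x, max_comm x]
    exact this hy hx (le_of_not_ge hyx)
  rw [abs_of_nonneg (sub_nonneg.2 (Real.rpow_le_rpow hy hyx hq)),
    abs_of_nonneg (sub_nonneg.2 hyx), max_eq_left hyx]
  rcases le_total q 1 with hq1 | hq1
  · have h := Real.rpow_add_le_add_rpow (sub_nonneg.2 hyx) hy hq hq1
    rw [sub_add_cancel] at h
    simpa [min_eq_right hq1, max_eq_left hq1] using h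
  · rw [min_eq_left hq1, max_eq_right hq1, Real.rpow_one]
    rcases hx.eq_or_lt with rfl | hx0
    · simp [le_antisymm hyx hy]
    · exact rpow_sub_rpow_le_mul_sub hq1 hx0 hy

theorem abs_Jp_sub_Jp_le (hp : 1 < p) (x y : ℝ) :
    |Jp p x - Jp p y| ≤
      max 2 (p - 1) * |x - y| ^ min 1 (p - 1) * max |x| |y| ^ (p - 1 - min 1 (p - 1)) := by
  have hq : 0 < p - 1 := sub_pos.2 hp
  wlog hx : 0 ≤ x generalizing x y
  · have h := this (-x) (-y) (by linarith)
    rwa [Jp_neg, Jp_neg, abs_neg x, abs_neg y, ← neg_sub', abs_neg, ← neg_sub', abs_neg] at h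
  rcases le_total 0 y with hy | hy
  · rw [Jp_of_nonneg hp hx, Jp_of_nonneg hp hy, abs_of_nonneg hx, abs_of_nonneg hy]
    refine (abs_rpow_sub_rpow_le hq.le hx hy).trans ?_
    gcongr
    norm_num
  · set m := max |x| |y|
    have hm : 0 ≤ m := le_max_of_le_left (abs_nonneg x)
    have hm_le : m ≤ |x - y| := by
      rw [abs_of_nonneg (by linarith : 0 ≤ x - y)]
      exact max_le (by rw [abs_of_nonneg hx]; linarith) (by rw [abs_of_nonpos hy]; linarith)
    calc |Jp p x - Jp p y| ≤ |Jp p x| + |Jp p y| := abs_sub _ _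
      _ ≤ m ^ (p - 1) + m ^ (p - 1) :=
          add_le_add (abs_Jp_le_rpow hp (le_max_left _ _)) (abs_Jp_le_rpow hp (le_max_right _ _))
      _ = 2 * m ^ min 1 (p - 1) * m ^ (p - 1 - min 1 (p - 1)) := by
          rw [mul_assoc, ← Real.rpow_add_of_nonneg hm (by positivity)
            (sub_nonneg.2 (min_le_right _ _)), add_sub_cancel, two_mul]
      _ ≤ _ := by
          gcongr
          exact le_max_left _ _

theorem abs_Jp_sub_add_Jp_le (hp : 1 < p) {a : ℝ} (ha : |a| ≤ 1) (b : ℝ) :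
    |Jp p (a - b) + Jp p b| ≤ 2 ^ p * |a| ^ min 1 (p - 1) * (1 + |b|) ^ (p - 1) := by
  have hq : 0 < p - 1 := sub_pos.2 hp
  have hconst : max 2 (p - 1) ≤ (2 : ℝ) ^ p := by
    have bernoulli := one_add_mul_self_le_rpow_one_add (s := 1) (by norm_num) hp.le
    norm_num at bernoulli
    exact max_le (by linarith) (by linarith)
  have hmax : max |a - b| |b| ≤ 1 + |b| :=
    max_le ((abs_sub a b).trans (by gcongr)) (by linarith)
  have hJ := abs_Jp_sub_Jp_le hp (a - b) (-b)
  rw [Jp_neg, sub_neg_eq_add, sub_neg_eq_add, sub_add_cancel, abs_neg] at hJ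
  refine hJ.trans (mul_le_mul (by gcongr) ?_ (by positivity) (by positivity))
  calc max |a - b| |b| ^ (p - 1 - min 1 (p - 1))
      ≤ (1 + |b|) ^ (p - 1 - min 1 (p - 1)) :=
        Real.rpow_le_rpow (by positivity) hmax (sub_nonneg.2 (min_le_right _ _))
    _ ≤ (1 + |b|) ^ (p - 1) :=
        Real.rpow_le_rpow_of_exponent_le (by linarith [abs_nonneg b])
          (sub_le_self _ (le_min zero_le_one hq.le))

theorem abs_Jp_le_of_abs_le_two_mul (hp : 1 < p) {t δ : ℝ} (hδ : 0 ≤ δ) (hδ1 : δ ≤ 1)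
    (ht : |t| ≤ 2 * δ) : |Jp p t| ≤ 2 ^ p * δ ^ min 1 (p - 1) := by
  have hq : 0 < p - 1 := sub_pos.2 hp
  calc |Jp p t| ≤ (2 * δ) ^ (p - 1) := abs_Jp_le_rpow hp ht
    _ = 2 ^ (p - 1) * δ ^ (p - 1) := Real.mul_rpow zero_le_two hδ
    _ ≤ 2 ^ p * δ ^ min 1 (p - 1) := by
        gcongr ?_ * ?_
        · exact Real.rpow_le_rpow_of_exponent_le one_le_two (by linarith)
        · exact Real.rpow_le_rpow_of_exponent_ge' hδ hδ1 (le_min zero_le_one hq.le)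
            (min_le_right _ _)

end Jp

section TailDensity

variable {E : Type*} [SeminormedAddCommGroup E] {u : E → ℝ} {p N ε : ℝ} {x y : E}

/-- The density `(1 + |u(y)|)^{p-1} (1 + |y|)^{-N}`, which dominates every integrand below. The
`1 +` in the first factor accounts for the constant `u(x)` in `J_p(u(x) - u(y))`. -/
def tailDensity (u : E → ℝ) (p N : ℝ) (y : E) : ℝ :=
  (1 + |u y|) ^ (p - 1) * (1 / (1 + ‖y‖) ^ N)

theorem one_add_rpow_le {q t : ℝ} (hq : 0 ≤ q) (ht : 0 ≤ t) :
    (1 + t) ^ q ≤ 2 ^ q * (1 + t ^ q) := by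
  have htq : 0 ≤ t ^ q := by positivity
  rcases le_total 1 t with h | h
  · calc (1 + t) ^ q ≤ (2 * t) ^ q := by gcongr; linarith
      _ = 2 ^ q * t ^ q := Real.mul_rpow zero_le_two ht
      _ ≤ 2 ^ q * (1 + t ^ q) := by gcongr; linarith
  · calc (1 + t) ^ q ≤ 2 ^ q := by gcongr; linarith
      _ ≤ 2 ^ q * (1 + t ^ q) := le_mul_of_one_le_right (by positivity) (by linarith)

theorem integrable_tailDensity [MeasurableSpace E] [OpensMeasurableSpace E] {μ : Measure E}
    (hp : 1 ≤ p) (hμ : Integrable (fun y => (1 + ‖y‖) ^ (-N)) μ) (hu : AEMeasurable u μ)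
    (hint : Integrable (fun y => |u y| ^ (p - 1) / (1 + ‖y‖) ^ N) μ) :
    Integrable (tailDensity u p N) μ := by
  refine ((hμ.add hint).const_mul (2 ^ (p - 1))).mono' ?_ (.of_forall fun y => ?_)
  · unfold tailDensity
    exact AEMeasurable.aestronglyMeasurable (by fun_prop)
  · rw [Real.norm_of_nonneg (by unfold tailDensity; positivity)]
    calc tailDensity u p N y
        ≤ 2 ^ (p - 1) * (1 + |u y| ^ (p - 1)) * (1 / (1 + ‖y‖) ^ N) := by
          unfold tailDensity
          gcongr
          exact one_add_rpow_le (sub_nonneg.2 hp) (abs_nonneg _)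
      _ = 2 ^ (p - 1) * ((1 + ‖y‖) ^ (-N) + |u y| ^ (p - 1) / (1 + ‖y‖) ^ N) := by
          rw [Real.rpow_neg (by positivity)]
          ring

theorem one_div_norm_sub_rpow_le (hN : 0 ≤ N) (hε : 0 < ε) (hε1 : ε ≤ 1) (hx : ‖x‖ ≤ 1)
    (hxy : ε ≤ ‖x - y‖) : 1 / ‖x - y‖ ^ N ≤ (3 / ε) ^ N * (1 / (1 + ‖y‖) ^ N) := by
  have hpos : 0 < ‖x - y‖ := hε.trans_le hxy
  have hy : ‖y‖ ≤ ‖x‖ + ‖x - y‖ := by simpa using norm_sub_le x (x - y)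
  have hweight : 1 + ‖y‖ ≤ 3 / ε * ‖x - y‖ := by
    rw [div_mul_eq_mul_div, le_div_iff₀ hε]
    nlinarith [norm_nonneg y]
  rw [mul_one_div, div_le_div_iff₀ (by positivity) (by positivity), one_mul,
    ← Real.mul_rpow (by positivity) hpos.le]
  gcongr

theorem abs_div_norm_sub_rpow_le (hN : 0 ≤ N) (hε : 0 < ε) (hε1 : ε ≤ 1) (hx : ‖x‖ ≤ 1)
    (hxy : ε ≤ ‖x - y‖) {T A : ℝ} (hT : |T| ≤ A * (1 + |u y|) ^ (p - 1)) :
    |T / ‖x - y‖ ^ N| ≤ A * (3 / ε) ^ N * tailDensity u p N y := by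
  have hpos : 0 < ‖x - y‖ := hε.trans_le hxy
  calc |T / ‖x - y‖ ^ N| = |T| * (1 / ‖x - y‖ ^ N) := by
        rw [abs_div, abs_of_pos (by positivity : 0 < ‖x - y‖ ^ N), mul_one_div]
    _ ≤ A * (1 + |u y|) ^ (p - 1) * ((3 / ε) ^ N * (1 / (1 + ‖y‖) ^ N)) :=
        mul_le_mul hT (one_div_norm_sub_rpow_le hN hε hε1 hx hxy) (by positivity)
          ((abs_nonneg T).trans hT)
    _ = A * (3 / ε) ^ N * tailDensity u p N y := by
        rw [tailDensity]
        ring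

theorem integrableOn_div_norm_sub_rpow [MeasurableSpace E] [OpensMeasurableSpace E]
    {μ : Measure E} (hN : 0 ≤ N) (hε : 0 < ε) (hε1 : ε ≤ 1) (hx : ‖x‖ ≤ 1)
    (hint : Integrable (tailDensity u p N) μ) {S : Set E} (hS : MeasurableSet S)
    (hSε : ∀ y ∈ S, ε ≤ ‖x - y‖) {v : E → ℝ} (hv : AEMeasurable v μ)
    (hvu : ∀ y, |v y| ≤ (1 + |u y|) ^ (p - 1)) :
    IntegrableOn (fun y => v y / ‖x - y‖ ^ N) S μ := by
  have hdist : Measurable fun y => ‖x - y‖ := (continuous_const.sub continuous_id).norm.measurable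
  refine (hint.const_mul (1 * (3 / ε) ^ N)).integrableOn.mono'
    (hv.div (hdist.pow_const N).aemeasurable).aestronglyMeasurable.restrict ?_
  refine ae_restrict_of_forall_mem hS fun y hy => ?_
  exact abs_div_norm_sub_rpow_le hN hε hε1 hx (hSε y hy) (by simpa using hvu y)

end TailDensity

section NonlocalRemainder

variable {E : Type*} [SeminormedAddCommGroup E] {u : E → ℝ} {p N r ε δ : ℝ} {x y : E}

/-- The quantity `W₂(x, ε)` of the paper, with radius `r` for `(k + 1) ε`, exponent `N` for
`d + sp`, and an arbitrary reference measure `μ`. -/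
def nonlocalRemainder [MeasurableSpace E] (μ : Measure E) (u : E → ℝ) (p N r : ℝ) (x : E) : ℝ :=
  (∫ y in (ball x r)ᶜ, Jp p (u x - u y) / ‖x - y‖ ^ N ∂μ)
    + (∫ y in (ball (0 : E) r)ᶜ, Jp p (u y) / ‖y‖ ^ N ∂μ)
    + ∫ y in (ball (0 : E) r)ᶜ, Jp p (u y) * (1 / ‖x - y‖ ^ N - 1 / ‖y‖ ^ N) ∂μ

/-- The numerator over the kernel `|x - y|^{-N}` when the three integrals of
`nonlocalRemainder` are merged into one. -/
def remainderNumerator (u : E → ℝ) (p r : ℝ) (x y : E) : ℝ :=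
  (ball x r)ᶜ.indicator (fun y => Jp p (u x - u y)) y
    + (ball (0 : E) r)ᶜ.indicator (fun y => Jp p (u y)) y

theorem le_norm_sub_of_notMem_ball_zero (hxr : ‖x‖ + ε ≤ r) (hy : y ∉ ball (0 : E) r) :
    ε ≤ ‖x - y‖ := by
  have hyr : r ≤ ‖y‖ := by simpa using hy
  linarith [norm_sub_norm_le y x, norm_sub_rev x y]

theorem le_norm_sub_of_notMem_ball (hxr : ‖x‖ + ε ≤ r) (hy : y ∉ ball x r) :
    ε ≤ ‖x - y‖ := by
  have hyr : r ≤ ‖x - y‖ := by simpa [dist_eq_norm, norm_sub_rev] using hy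
  linarith [norm_nonneg x]

theorem nonlocalRemainder_eq_integral [MeasurableSpace E] [OpensMeasurableSpace E]
    {μ : Measure E}
    (hdiff : IntegrableOn (fun y => Jp p (u x - u y) / ‖x - y‖ ^ N) (ball x r)ᶜ μ)
    (hfar₀ : IntegrableOn (fun y => Jp p (u y) / ‖y‖ ^ N) (ball (0 : E) r)ᶜ μ)
    (hfar : IntegrableOn (fun y => Jp p (u y) / ‖x - y‖ ^ N) (ball (0 : E) r)ᶜ μ) :
    nonlocalRemainder μ u p N r x = ∫ y, remainderNumerator u p r x y / ‖x - y‖ ^ N ∂μ := by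
  have hsplit : (∫ y in (ball (0 : E) r)ᶜ, Jp p (u y) * (1 / ‖x - y‖ ^ N - 1 / ‖y‖ ^ N) ∂μ)
      = (∫ y in (ball (0 : E) r)ᶜ, Jp p (u y) / ‖x - y‖ ^ N ∂μ)
        - ∫ y in (ball (0 : E) r)ᶜ, Jp p (u y) / ‖y‖ ^ N ∂μ := by
    rw [← integral_sub hfar hfar₀]
    congr 1 with y
    ring
  have hball (z : E) : MeasurableSet (ball z r)ᶜ := measurableSet_ball.compl
  rw [nonlocalRemainder, hsplit, add_assoc, add_sub_cancel, ← integral_indicator (hball x),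
    ← integral_indicator (hball 0), ← integral_add (hdiff.integrable_indicator (hball x))
      (hfar.integrable_indicator (hball 0))]
  congr 1 with y
  by_cases hyx : y ∈ (ball x r)ᶜ <;> by_cases hy0 : y ∈ (ball (0 : E) r)ᶜ <;>
    simp only [remainderNumerator, hyx, hy0, indicator_of_mem, indicator_of_notMem,
      not_false_eq_true, add_div, zero_div]

theorem remainderNumerator_eq_zero_of_norm_sub_lt (hxr : ‖x‖ + ε ≤ r) (hxy : ‖x - y‖ < ε) :
    remainderNumerator u p r x y = 0 := by
  have hyx : y ∈ ball x r := by_contra fun h => (le_norm_sub_of_notMem_ball hxr h).not_gt hxy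
  have hy0 : y ∈ ball (0 : E) r :=
    by_contra fun h => (le_norm_sub_of_notMem_ball_zero hxr h).not_gt hxy
  simp [remainderNumerator, hyx, hy0, -mem_ball]

theorem abs_remainderNumerator_le (hp : 1 < p) (hxr : ‖x‖ < r) (hδ1 : δ ≤ 1)
    (hu : ∀ y, ‖y‖ < 2 * r → |u y| ≤ δ) (y : E) :
    |remainderNumerator u p r x y| ≤
      2 ^ p * δ ^ min 1 (p - 1) * (1 + |u y|) ^ (p - 1) := by
  have hq : 0 < p - 1 := sub_pos.2 hp
  have hux : |u x| ≤ δ := hu x (by linarith [norm_nonneg x])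
  have hδ : 0 ≤ δ := (abs_nonneg _).trans hux
  have hsmall {t : ℝ} (ht : |t| ≤ 2 * δ) :
      |Jp p t| ≤ 2 ^ p * δ ^ min 1 (p - 1) * (1 + |u y|) ^ (p - 1) :=
    (abs_Jp_le_of_abs_le_two_mul hp hδ hδ1 ht).trans <| le_mul_of_one_le_right (by positivity) <|
      Real.one_le_rpow (by linarith [abs_nonneg (u y)]) hq.le
  unfold remainderNumerator
  by_cases hyx : y ∈ (ball x r)ᶜ <;> by_cases hy0 : y ∈ (ball (0 : E) r)ᶜ
  · rw [indicator_of_mem hyx, indicator_of_mem hy0]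
    refine (abs_Jp_sub_add_Jp_le hp (hux.trans hδ1) (u y)).trans ?_
    gcongr
  · rw [indicator_of_mem hyx, indicator_of_notMem hy0, add_zero]
    have hy : ‖y‖ < r := by simpa using hy0
    exact hsmall (by linarith [abs_sub (u x) (u y), hu y (by linarith [norm_nonneg y])])
  · rw [indicator_of_notMem hyx, indicator_of_mem hy0, zero_add]
    have hy : ‖y - x‖ < r := by simpa [dist_eq_norm] using hyx
    exact hsmall (by linarith [hu y (by linarith [norm_sub_norm_le y x])])
  · rw [indicator_of_notMem hyx, indicator_of_notMem hy0, add_zero, abs_zero]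
    positivity

theorem abs_nonlocalRemainder_le [MeasurableSpace E] [OpensMeasurableSpace E] {μ : Measure E}
    (hN : 0 ≤ N) (hp : 1 < p) (hum : AEMeasurable u μ) (hint : Integrable (tailDensity u p N) μ)
    (hε : 0 < ε) (hε1 : ε ≤ 1) (hx : ‖x‖ ≤ 1) (hxr : ‖x‖ + ε ≤ r) (hδ1 : δ ≤ 1)
    (hu : ∀ y, ‖y‖ < 2 * r → |u y| ≤ δ) :
    |nonlocalRemainder μ u p N r x| ≤
      2 ^ p * δ ^ min 1 (p - 1) * (3 / ε) ^ N * ∫ y, tailDensity u p N y ∂μ := by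
  have hux : |u x| ≤ 1 := (hu x (by linarith [norm_nonneg x])).trans hδ1
  have hJdiff (y : E) : |Jp p (u x - u y)| ≤ (1 + |u y|) ^ (p - 1) :=
    abs_Jp_le_rpow hp ((abs_sub _ _).trans (by gcongr))
  have hJ (y : E) : |Jp p (u y)| ≤ (1 + |u y|) ^ (p - 1) :=
    abs_Jp_le_rpow hp (by linarith)
  have hJm := measurable_Jp p
  have hball (z : E) : MeasurableSet (ball z r)ᶜ := measurableSet_ball.compl
  have hdiff : IntegrableOn (fun y => Jp p (u x - u y) / ‖x - y‖ ^ N) (ball x r)ᶜ μ :=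
    integrableOn_div_norm_sub_rpow hN hε hε1 hx hint (hball x)
      (fun y => le_norm_sub_of_notMem_ball hxr) (hJm.comp_aemeasurable (hum.const_sub _)) hJdiff
  have hfar (z : E) (hz : ‖z‖ ≤ 1) (hzr : ‖z‖ + ε ≤ r) :
      IntegrableOn (fun y => Jp p (u y) / ‖z - y‖ ^ N) (ball (0 : E) r)ᶜ μ :=
    integrableOn_div_norm_sub_rpow hN hε hε1 hz hint (hball 0)
      (fun y => le_norm_sub_of_notMem_ball_zero hzr) (hJm.comp_aemeasurable hum) hJ
  have hfar₀ : IntegrableOn (fun y => Jp p (u y) / ‖y‖ ^ N) (ball (0 : E) r)ᶜ μ := by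
    have hεr : ε ≤ r := by linarith [norm_nonneg x]
    simpa using hfar 0 (by simp) (by simpa using hεr)
  rw [nonlocalRemainder_eq_integral hdiff hfar₀ (hfar x hx hxr), ← integral_const_mul,
    ← Real.norm_eq_abs]
  refine norm_integral_le_of_norm_le (hint.const_mul _) (.of_forall fun y => ?_)
  rcases lt_or_ge ‖x - y‖ ε with hxy | hxy
  · have hδ : 0 ≤ δ := (abs_nonneg _).trans (hu x (by linarith [norm_nonneg x]))
    rw [remainderNumerator_eq_zero_of_norm_sub_lt hxr hxy, zero_div, norm_zero, tailDensity]
    positivity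
  · exact abs_div_norm_sub_rpow_le hN hε hε1 hx hxy
      (abs_remainderNumerator_le hp (by linarith) hδ1 hu y)

end NonlocalRemainder

theorem eventually_forall_abs_le_pow {E : Type*} [SeminormedAddCommGroup E] {u : E → ℝ} {n : ℕ}
    (hu : u =O[nhds 0] fun x => ‖x‖ ^ (n + 1)) {c : ℝ} (hc : 0 < c) :
    ∀ᶠ ε in nhdsWithin (0 : ℝ) (Ioi 0), ∀ y, ‖y‖ < c * ε → |u y| ≤ ε ^ n := by
  have hlittle : u =o[nhds 0] fun x => ‖x‖ ^ n :=
    hu.trans_isLittleO (isLittleO_norm_pow_norm_pow n.lt_succ_self)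
  obtain ⟨ρ, hρ, hball⟩ := Metric.eventually_nhds_iff.1
    (hlittle.bound (inv_pos.2 (pow_pos hc n)))
  filter_upwards [Ioo_mem_nhdsGT (div_pos hρ hc)] with ε hε y hy
  have hyρ : ‖y‖ < ρ := hy.trans (by simpa [mul_comm] using (lt_div_iff₀ hc).1 hε.2)
  calc |u y| ≤ (c ^ n)⁻¹ * ‖y‖ ^ n := by simpa using hball (by simpa using hyρ)
    _ ≤ (c ^ n)⁻¹ * (c * ε) ^ n := by gcongr
    _ = ε ^ n := by rw [mul_pow, inv_mul_cancel_left₀ (by positivity)]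

theorem pow_rpow_mul_div_rpow_le {N a θ ε : ℝ} {n M : ℕ} (ha : 0 ≤ a) (hM : n + N ≤ M * θ)
    (hε : 0 < ε) (hε1 : ε ≤ 1) : (ε ^ M) ^ θ * (a / ε) ^ N ≤ a ^ N * ε ^ n :=
  calc (ε ^ M) ^ θ * (a / ε) ^ N = a ^ N * ε ^ (M * θ - N) := by
        rw [← Real.rpow_natCast_mul hε.le, Real.div_rpow ha hε.le, Real.rpow_sub hε]
        ring
    _ ≤ a ^ N * ε ^ n := by
        rw [← Real.rpow_natCast ε n]
        gcongr ?_ * ?_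
        exact Real.rpow_le_rpow_of_exponent_ge hε hε1 (by linarith)

theorem claimB_general {E : Type*} [SeminormedAddCommGroup E] [MeasurableSpace E]
    [OpensMeasurableSpace E] {μ : Measure E} {N p : ℝ} (hN : 0 ≤ N) (hp : 1 < p)
    (hμ : Integrable (fun y => (1 + ‖y‖) ^ (-N)) μ) {u : E → ℝ} (hum : AEMeasurable u μ)
    (hint : Integrable (fun y => |u y| ^ (p - 1) / (1 + ‖y‖) ^ N) μ)
    (hvan : ∀ n : ℕ, u =O[nhds 0] fun x => ‖x‖ ^ n) {k : ℝ} (hk : 0 ≤ k) (n : ℕ) :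
    ∃ C > (0 : ℝ), ∃ ε₁ > (0 : ℝ), ∀ ε ∈ Ioo (0 : ℝ) ε₁, ∀ x ∈ ball (0 : E) (k * ε),
      |nonlocalRemainder μ u p N ((k + 1) * ε) x| ≤ C * ε ^ n := by
  have hθ : 0 < min 1 (p - 1) := lt_min one_pos (sub_pos.2 hp)
  obtain ⟨M, hM⟩ := exists_nat_ge ((n + N) / min 1 (p - 1))
  rw [div_le_iff₀ hθ] at hM
  set I := ∫ y, tailDensity u p N y ∂μ
  have hI : 0 ≤ I := integral_nonneg fun y => by simp only [tailDensity]; positivity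
  refine ⟨2 ^ p * 3 ^ N * I + 1, by positivity, ?_⟩
  refine mem_nhdsGT_iff_exists_Ioo_subset.1 ?_
  filter_upwards [eventually_forall_abs_le_pow (hvan (M + 1)) (c := 2 * (k + 1)) (by positivity),
    Ioo_mem_nhdsGT (one_div_pos.2 (by positivity : 0 < k + 1))] with ε hu ⟨hε, hεk⟩ x hx
  rw [lt_div_iff₀ (by positivity)] at hεk
  have hε1 : ε ≤ 1 := by nlinarith
  have hx : ‖x‖ < k * ε := by simpa using hx
  calc |nonlocalRemainder μ u p N ((k + 1) * ε) x|
      ≤ 2 ^ p * (ε ^ M) ^ min 1 (p - 1) * (3 / ε) ^ N * I :=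
        abs_nonlocalRemainder_le hN hp hum (integrable_tailDensity hp.le hμ hum hint) hε hε1
          (by linarith) (by linarith) (pow_le_one₀ hε.le hε1) (by simpa [mul_assoc] using hu)
    _ = 2 ^ p * I * ((ε ^ M) ^ min 1 (p - 1) * (3 / ε) ^ N) := by ring
    _ ≤ 2 ^ p * I * (3 ^ N * ε ^ n) := by
        gcongr _ * ?_
        exact pow_rpow_mul_div_rpow_le zero_le_three hM hε hε1
    _ ≤ (2 ^ p * 3 ^ N * I + 1) * ε ^ n := by linarith [pow_pos hε n]

/-- Claim B. If `u ∈ L^{p-1}_{sp}(ℝ^d)` is continuous on `B_{R₀}(0)` and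
vanishes to infinite order at `0`, then
`W₂(x,ε) = ∫_{B_{(k+1)ε}(x)^c} J_p(u(x)-u(y)) |x-y|^{-d-sp} dy
  + ∫_{B_{(k+1)ε}(0)^c} J_p(u(y)) |y|^{-d-sp} dy
  + ∫_{B_{(k+1)ε}(0)^c} J_p(u(y)) (|x-y|^{-d-sp} - |y|^{-d-sp}) dy`
converges to zero of arbitrary order, uniformly for `x ∈ B_{kε}(0)`. -/
theorem claimB
    (d : ℕ) (hd : 1 ≤ d) (s p : ℝ) (hs : s ∈ Ioo (0 : ℝ) 1) (hp : 1 < p)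
    (R₀ : ℝ) (hR₀ : R₀ ∈ Ioo (0 : ℝ) 1) (k : ℕ)
    (u : Ed d → ℝ) (hu : memTail d s p u)
    (hcont : ContinuousOn u (ball (0 : Ed d) R₀))
    (hvan : ∀ n : ℕ, u =O[nhds (0 : Ed d)] fun x => ‖x‖ ^ n) :
    ∀ n : ℕ, ∃ C > (0 : ℝ), ∃ ε₁ > (0 : ℝ), ∀ ε ∈ Ioo (0 : ℝ) ε₁,
      ∀ x ∈ ball (0 : Ed d) (k * ε),
        |(∫ y in (ball x ((k + 1) * ε))ᶜ, Jp p (u x - u y) / ‖x - y‖ ^ ((d : ℝ) + s * p))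
          + (∫ y in (ball (0 : Ed d) ((k + 1) * ε))ᶜ, Jp p (u y) / ‖y‖ ^ ((d : ℝ) + s * p))
          + (∫ y in (ball (0 : Ed d) ((k + 1) * ε))ᶜ, Jp p (u y) *
              (1 / ‖x - y‖ ^ ((d : ℝ) + s * p) - 1 / ‖y‖ ^ ((d : ℝ) + s * p)))|
          ≤ C * ε ^ n := by
  have hsp : 0 < s * p := mul_pos hs.1 (by linarith)
  have hμ : Integrable fun y : Ed d => (1 + ‖y‖) ^ (-((d : ℝ) + s * p)) :=
    integrable_one_add_norm (by simpa using hsp)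
  exact claimB_general (by positivity) hp hμ hu.1.aemeasurable hu.2 hvan k.cast_nonneg
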